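/- There exist absolute constants C1, C2, C3 > 0 with the following property. Let p ≥ 16 be a prime and let γ ∈ F_p^* have multiplicative order at least exp(C1·log p / log log p). Consider the lazy Markov chain (X_n) on F_p^* started from an arbitrary fixed X_0 ∈ F_p^*, whose one-step transition from a state x is: stay at x with probability 1/2, move to f_*(x)·γ with probability 1/4, and move to f_*(x)·γ^{-1} with probability 1/4. Then for every c > 0 and every integer n ≥ c·exp(log p / log log p), one has (1/2)·max_{A ⊆ F_p^*} |P(X_n ∈ A) − |A|/(p−1)| ≤ C2·e^{−C3·c}. -/

import Mathlib

open scoped BigOperators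

/-- The distribution of the Markov chain after `n` steps: the `n`-fold bind of
`step` applied to the point mass at `x0`. -/
noncomputable def walkDist {S : Type*} (step : S → PMF S) (x0 : S) : ℕ → PMF S :=
  fun n => (fun μ : PMF S => μ.bind step)^[n] (PMF.pure x0)

/-!
Laziness turns a Poincaré inequality for the two moves `x ↦ f_*(x) γ^{±1}` into exponential decay of
the `ℓ²` distance to the uniform distribution. Inversion conjugates the moves to the affine maps
`y ↦ (1 - y) γ^{∓1}`, and words of length `2 k + 2` in these are the translations by
`a θ ^ k`, where `a = γ⁻¹ - 1` and `θ = -γ`. By Fourier analysis the Poincaré inequality holds as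
soon as every frequency `ξ ≠ 0` has some `k ≤ L` for which `ξ a θ ^ k` is not small modulo `p`.

Suppose that instead all residues `ξ a θ ^ k`, `k ≤ L`, are small. By pigeonhole `θ` is a root
modulo `p` of an integer polynomial `P` of low degree with small coefficients; smallness lifts the
corresponding linear recurrence from `ZMod p` to the integer representatives, so these have a
minimal polynomial. Let `m` be its irreducible factor vanishing at `θ`. For each `j`, pigeonhole
also gives a polynomial `Q` with coefficients in `{-1, 0, 1}` vanishing at `θ ^ j`; again
`Q (X ^ j)` annihilates the integer sequence, hence is divisible by `m`. So all powers `α ^ j` of a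
root `α` of `m` have bounded degree and Mahler measure, `α` is a root of unity of small order, and
reduction modulo `p` bounds the order of `θ`.

With `p < 2 ^ (u ^ 3)`, `u ≍ (log p) ^ (1 / 3)`, all losses are `2 ^ O(u ^ 2)`, well below
`exp (log p / log log p)`.
-/

section Recurrences

open Polynomial

section CommRing

variable {R S : Type*} [CommRing R] [CommRing S]

variable (R) in
/-- The left shift on sequences. A polynomial `P` evaluated at it is the linear recurrence operator
`s ↦ (k ↦ ∑ i, P.coeff i * s (k + i))`. -/
def seqShift : Module.End R (ℕ → R) :=
  LinearMap.funLeft R R Nat.succ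

theorem seqShift_pow_apply (i : ℕ) (s : ℕ → R) (k : ℕ) : (seqShift R ^ i) s k = s (k + i) := by
  induction i generalizing k with
  | zero => rfl
  | succ i ih =>
    rw [pow_succ', Module.End.mul_apply]
    exact (ih (k + 1)).trans (by rw [add_right_comm, add_assoc])

theorem aeval_seqShift_apply (P : R[X]) (s : ℕ → R) (k : ℕ) :
    aeval (seqShift R) P s k = P.sum fun i a => a * s (k + i) := by
  simp only [aeval_eq_sum_range, sum_over_range, zero_mul, implies_true, LinearMap.sum_apply,
    LinearMap.smul_apply, Finset.sum_apply, Pi.smul_apply, seqShift_pow_apply, smul_eq_mul]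

theorem aeval_seqShift_map_apply (f : R →+* S) (P : R[X]) (s : ℕ → R) (k : ℕ) :
    aeval (seqShift S) (P.map f) (fun j => f (s j)) k = f (aeval (seqShift R) P s k) := by
  rw [aeval_seqShift_apply, aeval_seqShift_apply, sum_over_range' _ (by simp) _
    (Nat.lt_succ_of_le natDegree_map_le), sum_over_range _ (by simp)]
  simp only [coeff_map, map_sum, map_mul]

theorem aeval_seqShift_geometric (P : R[X]) (b θ : R) (k : ℕ) :
    aeval (seqShift R) P (fun j => b * θ ^ j) k = b * θ ^ k * P.eval θ := by
  rw [aeval_seqShift_apply, eval_eq_sum, Polynomial.sum, Polynomial.sum, Finset.mul_sum]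
  exact Finset.sum_congr rfl fun i _ => by ring

theorem aeval_seqShift_apply_congr {P : R[X]} {s t : ℕ → R} {k : ℕ}
    (h : ∀ i ≤ P.natDegree, s (k + i) = t (k + i)) :
    aeval (seqShift R) P s k = aeval (seqShift R) P t k := by
  rw [aeval_seqShift_apply, aeval_seqShift_apply]
  exact Finset.sum_congr rfl fun i hi =>
    congrArg (P.coeff i * ·) (h i (le_natDegree_of_mem_supp i hi))

theorem eq_zero_of_aeval_seqShift_eq_zero [IsDomain R] {P : R[X]} (hP : P ≠ 0) {s : ℕ → R} {L : ℕ}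
    (hrec : ∀ k, k + P.natDegree < L → aeval (seqShift R) P s k = 0)
    (hinit : ∀ k < P.natDegree, s k = 0) {k : ℕ} (hk : k < L) : s k = 0 := by
  induction k using Nat.strong_induction_on with
  | _ k ih =>
    rcases lt_or_ge k P.natDegree with hlt | hge
    · exact hinit k hlt
    have hlead := hrec (k - P.natDegree) (by omega)
    rw [aeval_seqShift_apply, sum_over_range _ (by simp), Finset.sum_range_succ,
      Finset.sum_eq_zero, zero_add, Nat.sub_add_cancel hge] at hlead
    · exact (mul_eq_zero.mp hlead).resolve_left (leadingCoeff_ne_zero.mpr hP)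
    · intro i hi
      have hi : i < P.natDegree := Finset.mem_range.mp hi
      rw [ih _ (by omega) (by omega), mul_zero]

theorem aeval_seqShift_eq_zero_of_initial [IsDomain R] {P Q : R[X]} (hP : P ≠ 0) {s : ℕ → R}
    (hrec : aeval (seqShift R) P s = 0)
    (hinit : ∀ k < P.natDegree, aeval (seqShift R) Q s k = 0) : aeval (seqShift R) Q s = 0 := by
  have hcomm : aeval (seqShift R) P (aeval (seqShift R) Q s) = 0 := by
    rw [← Module.End.mul_apply, ← map_mul, mul_comm, map_mul, Module.End.mul_apply, hrec, map_zero]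
  funext k
  exact eq_zero_of_aeval_seqShift_eq_zero hP (fun j _ => congrFun hcomm j) hinit
    (Nat.lt_succ_self k)

end CommRing

section Field

variable {K : Type*} [Field K]

theorem exists_aeval_seqShift_eq_zero_of_initial {P : K[X]} (hP : P ≠ 0) (s : ℕ → K) :
    ∃ t : ℕ → K, aeval (seqShift K) P t = 0 ∧ ∀ k < P.natDegree, t k = s k := by
  let E : LinearRecurrence K := ⟨P.natDegree, fun i => -P.coeff i / P.leadingCoeff⟩
  refine ⟨E.mkSol fun i => s i, funext fun k => ?_, fun k hk => E.mkSol_eq_init _ ⟨k, hk⟩⟩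
  have hlead : P.leadingCoeff ≠ 0 := leadingCoeff_ne_zero.mpr hP
  have hsol : E.mkSol (fun i => s i) (k + P.natDegree) =
      ∑ i ∈ Finset.range P.natDegree,
        -P.coeff i / P.leadingCoeff * E.mkSol (fun i => s i) (k + i) :=
    (E.is_sol_mkSol _ k).trans (Fin.sum_univ_eq_sum_range
      (fun i => -P.coeff i / P.leadingCoeff * E.mkSol (fun i => s i) (k + i)) _)
  rw [aeval_seqShift_apply, sum_over_range _ (by simp), Finset.sum_range_succ, hsol,
    Finset.mul_sum, ← Finset.sum_add_distrib]
  refine Finset.sum_eq_zero fun i _ => ?_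
  rw [coeff_natDegree]
  field_simp
  ring

theorem exists_extension_aeval_seqShift_eq_zero {P : K[X]} (hP : P ≠ 0) {s : ℕ → K} {L : ℕ}
    (hrec : ∀ k, k + P.natDegree < L → aeval (seqShift K) P s k = 0) :
    ∃ t : ℕ → K, aeval (seqShift K) P t = 0 ∧ ∀ k < L, t k = s k := by
  obtain ⟨t, ht, hinit⟩ := exists_aeval_seqShift_eq_zero_of_initial hP s
  refine ⟨t, ht, fun k hk => sub_eq_zero.mp ?_⟩
  refine eq_zero_of_aeval_seqShift_eq_zero (s := t - s) hP (fun j hj => ?_) (fun j hj => ?_) hk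
  · rw [map_sub, Pi.sub_apply, ht, hrec j hj, Pi.zero_apply, sub_zero]
  · rw [Pi.sub_apply, hinit j hj, sub_self]

/-- The ideal of polynomials annihilating `s` as linear recurrences. -/
noncomputable def recurrenceIdeal (s : ℕ → K) : Ideal K[X] :=
  Ideal.torsionOf K[X] (Module.AEval' (seqShift K)) (Module.AEval'.of (seqShift K) s)

theorem mem_recurrenceIdeal {s : ℕ → K} {Q : K[X]} :
    Q ∈ recurrenceIdeal s ↔ aeval (seqShift K) Q s = 0 := by
  rw [recurrenceIdeal, Ideal.mem_torsionOf_iff, Module.AEval'.of, ← Module.AEval.of_aeval_smul,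
    LinearEquiv.map_eq_zero_iff, Module.End.smul_def]

end Field

theorem exists_isPrimitive_map_mem_iff_dvd {R K : Type*} [CommRing R] [IsDomain R]
    [NormalizedGCDMonoid R] [Field K] [Algebra R K] [IsFractionRing R K] {I : Ideal K[X]}
    (hI : I ≠ ⊥) :
    ∃ m : R[X], m.IsPrimitive ∧ ∀ Q : R[X], Q.map (algebraMap R K) ∈ I ↔ m ∣ Q := by
  obtain ⟨g, rfl⟩ := (IsPrincipalIdealRing.principal I).principal
  have hg : g ≠ 0 := by simpa using hI
  obtain ⟨n, hn, hmap⟩ := IsLocalization.integerNormalization_spec (nonZeroDivisors R) g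
  set G := IsLocalization.integerNormalization (nonZeroDivisors R) g
  have hn0 : algebraMap R K n ≠ 0 := by
    simpa using nonZeroDivisors.ne_zero hn
  have hmapG : G.map (algebraMap R K) = C (algebraMap R K n) * g := by
    rw [hmap, ← algebraMap_smul K, smul_eq_C_mul]
  have hG : G.content ≠ 0 := by
    rw [Ne, content_eq_zero_iff]
    intro h
    rw [h, Polynomial.map_zero] at hmapG
    exact mul_ne_zero (C_ne_zero.mpr hn0) hg hmapG.symm
  have hassoc : Associated (G.primPart.map (algebraMap R K)) g := by
    have hcontent : G.map (algebraMap R K) =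
        C (algebraMap R K G.content) * G.primPart.map (algebraMap R K) := by
      conv_lhs => rw [G.eq_C_content_mul_primPart, Polynomial.map_mul, map_C]
    refine (associated_unit_mul_right _ _ (isUnit_C.mpr ?_)).trans
      ((hcontent.symm.trans hmapG).symm ▸ associated_unit_mul_left _ _ (isUnit_C.mpr hn0.isUnit))
    exact IsUnit.mk0 _ (by simpa using hG)
  refine ⟨G.primPart, G.isPrimitive_primPart, fun Q => ?_⟩
  rw [Ideal.submodule_span_eq, Ideal.mem_span_singleton, ← hassoc.dvd_iff_dvd_left]
  exact (G.isPrimitive_primPart.dvd_iff_fraction_map_dvd_fraction_map K).symm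

theorem exists_minimal_windowed_recurrence {P : ℤ[X]} (hP : P ≠ 0) {s : ℕ → ℤ} {L : ℕ}
    (hrec : ∀ k, k + P.natDegree < L → aeval (seqShift ℤ) P s k = 0) :
    ∃ m : ℤ[X], m.IsPrimitive ∧ m ∣ P ∧
      (∀ k, k + m.natDegree < L → aeval (seqShift ℤ) m s k = 0) ∧
      ∀ Q : ℤ[X], P.natDegree + Q.natDegree ≤ L →
        (∀ k < P.natDegree, aeval (seqShift ℤ) Q s k = 0) → m ∣ Q := by
  have hinj : Function.Injective (algebraMap ℤ ℚ) := (algebraMap ℤ ℚ).injective_int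
  have hPmap : P.map (algebraMap ℤ ℚ) ≠ 0 := (Polynomial.map_ne_zero_iff hinj).mpr hP
  have hdeg (Q : ℤ[X]) : (Q.map (algebraMap ℤ ℚ)).natDegree = Q.natDegree :=
    natDegree_map_eq_of_injective hinj Q
  obtain ⟨t, ht, hts⟩ := exists_extension_aeval_seqShift_eq_zero hPmap
    (s := fun k => algebraMap ℤ ℚ (s k)) (L := L) fun k hk => by
      rw [aeval_seqShift_map_apply, hrec k (by rwa [hdeg] at hk), map_zero]
  have hcast (Q : ℤ[X]) (k : ℕ) (hk : k + Q.natDegree < L) :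
      aeval (seqShift ℚ) (Q.map (algebraMap ℤ ℚ)) t k =
        algebraMap ℤ ℚ (aeval (seqShift ℤ) Q s k) := by
    rw [← aeval_seqShift_map_apply]
    exact aeval_seqShift_apply_congr fun i hi => hts _ (by rw [hdeg] at hi; omega)
  have hPmem : P.map (algebraMap ℤ ℚ) ∈ recurrenceIdeal t := mem_recurrenceIdeal.mpr ht
  obtain ⟨m, hprim, hm⟩ := exists_isPrimitive_map_mem_iff_dvd (R := ℤ)
    (ne_of_mem_of_not_mem' hPmem (by simpa using hPmap))
  refine ⟨m, hprim, (hm P).mp hPmem, fun k hk => hinj ?_, fun Q hQ hinit => (hm Q).mp ?_⟩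
  · rw [← hcast m k hk, mem_recurrenceIdeal.mp ((hm m).mpr dvd_rfl), Pi.zero_apply, map_zero]
  · refine mem_recurrenceIdeal.mpr (aeval_seqShift_eq_zero_of_initial hPmap ht fun k hk => ?_)
    rw [hdeg] at hk
    rw [hcast Q k (by omega), hinit k hk, map_zero]

end Recurrences

section SmallPolynomials

open Polynomial

theorem exists_intPolynomial_aeval_eq_zero {R : Type*} [Ring R] [Fintype R] (t : R) {D H : ℕ}
    (hcard : Fintype.card R < H ^ D) :
    ∃ Q : ℤ[X], Q ≠ 0 ∧ Q.degree < D ∧ (∀ i, |Q.coeff i| < H) ∧ aeval t Q = 0 := by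
  let poly (c : Fin D → Fin H) : ℤ[X] := ofFn D fun i => ((c i : ℕ) : ℤ)
  obtain ⟨c, c', hne, heq⟩ := Fintype.exists_ne_map_eq_of_card_lt (fun c => aeval t (poly c))
    (by simpa using hcard)
  have hinj : Function.Injective poly := fun a b hab => funext fun i =>
    Fin.ext (Int.ofNat_injective (congrFun (injective_ofFn D hab) i))
  refine ⟨poly c - poly c', sub_ne_zero.mpr (hinj.ne hne), ?_, fun i => ?_, ?_⟩
  · exact (degree_sub_le _ _).trans_lt (max_lt (ofFn_degree_lt _) (ofFn_degree_lt _))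
  · rw [coeff_sub]
    rcases lt_or_ge i D with hi | hi
    · rw [ofFn_coeff_eq_val_of_lt _ hi, ofFn_coeff_eq_val_of_lt _ hi, abs_lt]
      omega
    · rw [ofFn_coeff_eq_zero_of_ge _ hi, ofFn_coeff_eq_zero_of_ge _ hi, sub_zero, abs_zero]
      obtain ⟨j, -⟩ := Function.ne_iff.mp hne
      exact_mod_cast (c j).pos
  · rw [map_sub, sub_eq_zero]
    exact heq

theorem sum_abs_coeff_le {Q : ℤ[X]} {D : ℕ} {H : ℤ} (hdeg : Q.degree < D)
    (hcoeff : ∀ i, |Q.coeff i| ≤ H) : (Q.sum fun _ a => |a|) ≤ D * H := by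
  have hsupp : Q.support ⊆ Finset.range D := fun i hi =>
    Finset.mem_range.mpr (WithBot.coe_lt_coe.mp ((le_degree_of_mem_supp i hi).trans_lt hdeg))
  rw [sum_eq_of_subset _ (fun _ => abs_zero) hsupp]
  simpa using Finset.sum_le_card_nsmul (Finset.range D) _ H fun i _ => hcoeff i

theorem aeval_seqShift_eq_zero_of_small {n : ℕ} {b θ : ZMod n} {s : ℕ → ℤ}
    (hs : ∀ k, (s k : ZMod n) = b * θ ^ k) {Q : ℤ[X]} (hθ : aeval θ Q = 0) {M : ℤ} (hM : 0 < M)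
    (hQM : (Q.sum fun _ a => |a|) ≤ M) {k : ℕ} (hsmall : ∀ i ≤ Q.natDegree, |s (k + i)| * M < n) :
    aeval (seqShift ℤ) Q s k = 0 := by
  have hdvd : (n : ℤ) ∣ aeval (seqShift ℤ) Q s k := by
    rw [← ZMod.intCast_zmod_eq_zero_iff_dvd, ← eq_intCast (Int.castRingHom (ZMod n)),
      ← aeval_seqShift_map_apply]
    simp only [eq_intCast, hs]
    rw [aeval_seqShift_geometric, ← algebraMap_int_eq, eval_map_algebraMap, hθ, mul_zero]
  have hn : (1 : ℤ) ≤ n :=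
    Int.lt_of_le_of_lt (mul_nonneg (abs_nonneg _) hM.le) (hsmall 0 (Nat.zero_le _))
  refine Int.eq_zero_of_abs_lt_dvd hdvd (lt_of_mul_lt_mul_right (a := M) ?_ hM.le)
  calc |aeval (seqShift ℤ) Q s k| * M
      ≤ (∑ i ∈ Q.support, |Q.coeff i * s (k + i)|) * M := by
        rw [aeval_seqShift_apply]
        exact mul_le_mul_of_nonneg_right (Finset.abs_sum_le_sum_abs _ _) hM.le
    _ = ∑ i ∈ Q.support, |Q.coeff i| * (|s (k + i)| * M) := by
        rw [Finset.sum_mul]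
        exact Finset.sum_congr rfl fun i _ => by rw [abs_mul, mul_assoc]
    _ ≤ ∑ i ∈ Q.support, |Q.coeff i| * (n - 1) := by
        gcongr with i hi
        exact Int.le_sub_one_of_lt (hsmall i (le_natDegree_of_mem_supp i hi))
    _ = (Q.sum fun _ a => |a|) * (n - 1) := (Finset.sum_mul _ _ _).symm
    _ ≤ M * (n - 1) := mul_le_mul_of_nonneg_right hQM (Int.sub_nonneg_of_le hn)
    _ < n * M := by linarith

theorem sum_abs_coeff_expand (Q : ℤ[X]) {j : ℕ} (hj : 0 < j) :
    ((expand ℤ j Q).sum fun _ a => |a|) = Q.sum fun _ a => |a| := by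
  refine (Finset.sum_nbij (· * j) (fun i hi => ?_) (mul_left_injective₀ hj.ne').injOn
    (fun i hi => ?_) fun i _ => ?_).symm
  · rwa [mem_support_iff, coeff_expand_mul hj, ← mem_support_iff]
  · obtain ⟨i, rfl⟩ : j ∣ i := by
      by_contra hji
      rw [Finset.mem_coe, mem_support_iff, coeff_expand hj, if_neg hji] at hi
      exact hi rfl
    rw [Finset.mem_coe, mem_support_iff, coeff_expand_mul' hj] at hi
    exact ⟨i, mem_support_iff.mpr hi, mul_comm i j⟩
  · rw [coeff_expand_mul hj]

end SmallPolynomials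

section Kronecker

open Polynomial
open scoped NNReal

theorem mahlerMeasure_le_of_dvd {P Q : ℤ[X]} (hQ : Q ≠ 0) (hPQ : P ∣ Q) :
    (P.map (Int.castRingHom ℂ)).mahlerMeasure ≤ (Q.map (Int.castRingHom ℂ)).mahlerMeasure := by
  obtain ⟨R, rfl⟩ := hPQ
  rw [Polynomial.map_mul, mahlerMeasure_mul]
  exact le_mul_of_one_le_right (mahlerMeasure_nonneg _)
    (one_le_mahlerMeasure_of_ne_zero (right_ne_zero_of_mul hQ))

theorem mahlerMeasure_map_le_sum_abs_coeff (Q : ℤ[X]) :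
    (Q.map (Int.castRingHom ℂ)).mahlerMeasure ≤ (Q.sum fun _ a => |a| : ℤ) := by
  refine (mahlerMeasure_le_sum_norm_coeff _).trans_eq ?_
  rw [Polynomial.sum, Polynomial.sum, support_map_of_injective _ (Int.castRingHom ℂ).injective_int]
  simp

variable {K : Type*} [Field K] [Algebra ℚ K] [FiniteDimensional ℚ K]

theorem natDegree_minpoly_int_le {x : K} (hx : IsIntegral ℤ x) :
    (minpoly ℤ x).natDegree ≤ Module.finrank ℚ K := by
  rw [← (minpoly.monic hx).natDegree_map (algebraMap ℤ ℚ),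
    ← minpoly.isIntegrallyClosed_eq_field_fractions' ℚ hx]
  exact minpoly.natDegree_le x

theorem ncard_natDegree_le_mahlerMeasure_le (n B : ℕ) :
    {P : ℤ[X] | P.natDegree ≤ n ∧
      (P.map (Int.castRingHom ℂ)).mahlerMeasure ≤ (B : ℝ≥0)}.ncard ≤
      (2 * (2 ^ n * B) + 1) ^ (n + 1) := by
  refine (card_mahlerMeasure_le_prod n B).trans ?_
  refine (Finset.prod_le_pow_card _ _ (2 * (2 ^ n * B) + 1) fun i _ => ?_).trans_eq (by simp)
  rw [← Nat.cast_mul, Nat.floor_natCast]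
  gcongr
  exact Nat.choose_le_two_pow n i

/-- As in Kronecker's theorem: the powers `x ^ j` with `j ≤ N` are roots of fewer than `N / n`
possible minimal polynomials, so two of them coincide. -/
theorem exists_pow_eq_one_of_mahlerMeasure_le {x : K} (hx0 : x ≠ 0) (hx : IsIntegral ℤ x)
    {n : ℕ} (hn : Module.finrank ℚ K ≤ n) {B N : ℕ}
    (hroot : ∀ j, 0 < j → j ≤ N → ∃ Q : ℤ[X], Q ≠ 0 ∧
      (Q.map (Int.castRingHom ℂ)).mahlerMeasure ≤ B ∧ aeval (x ^ j) Q = 0)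
    (hN : (2 * (2 ^ n * B) + 1) ^ (n + 1) * n < N) :
    ∃ t, 0 < t ∧ t < N ∧ x ^ t = 1 := by
  classical
  have : CharZero K := algebraRat.charZero K
  let S : Finset ℤ[X] := (finite_mahlerMeasure_le n B).toFinset
  have hS : S.card * n < N := by
    refine (Nat.mul_le_mul_right n ?_).trans_lt hN
    rw [← Set.ncard_eq_toFinset_card _ (finite_mahlerMeasure_le n B)]
    exact ncard_natDegree_le_mahlerMeasure_le n B
  let T : Finset K := S.biUnion fun q => (q.aroots K).toFinset
  have hT : T.card < (Finset.Icc 1 N).card := by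
    rw [Nat.card_Icc, Nat.add_sub_cancel]
    refine (Finset.card_biUnion_le_card_mul _ _ n fun q hq => ?_).trans_lt hS
    have hdeg : q.natDegree ≤ n := ((Set.Finite.mem_toFinset _).mp hq).1
    exact (Multiset.toFinset_card_le _).trans ((card_roots' _).trans
      (natDegree_map_le.trans hdeg))
  have hmaps : ∀ j ∈ Finset.Icc 1 N, x ^ j ∈ T := by
    intro j hj
    obtain ⟨hj0, hjN⟩ := Finset.mem_Icc.mp hj
    obtain ⟨Q, hQ, hQB, hQx⟩ := hroot j hj0 hjN
    have hxj : IsIntegral ℤ (x ^ j) := hx.pow j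
    refine Finset.mem_biUnion.mpr ⟨minpoly ℤ (x ^ j), (Set.Finite.mem_toFinset _).mpr
      ⟨(natDegree_minpoly_int_le hxj).trans hn, (mahlerMeasure_le_of_dvd hQ
        (minpoly.isIntegrallyClosed_dvd hxj hQx)).trans hQB⟩, ?_⟩
    rw [Multiset.mem_toFinset, mem_aroots]
    exact ⟨minpoly.ne_zero hxj, minpoly.aeval ℤ _⟩
  obtain ⟨i, hi, j, hj, hij, hpow⟩ := Finset.exists_ne_map_eq_of_card_lt_of_maps_to hT hmaps
  wlog hlt : i < j generalizing i j
  · exact this j hj i hi hij.symm hpow.symm (hij.lt_or_gt.resolve_left hlt)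
  obtain ⟨hi0, -⟩ := Finset.mem_Icc.mp hi
  obtain ⟨-, hjN⟩ := Finset.mem_Icc.mp hj
  refine ⟨j - i, by omega, by omega, mul_left_cancel₀ (pow_ne_zero i hx0) ?_⟩
  rw [← pow_add, Nat.add_sub_cancel' hlt.le, mul_one, hpow]

theorem aeval_root_map_eq_zero_iff {m : ℤ[X]} (hprim : m.IsPrimitive) {F : ℤ[X]} :
    aeval (AdjoinRoot.root (m.map (algebraMap ℤ ℚ))) F = 0 ↔ m ∣ F := by
  rw [hprim.dvd_iff_fraction_map_dvd_fraction_map ℚ, ← AdjoinRoot.mk_eq_zero, ← AdjoinRoot.aeval_eq,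
    aeval_map_algebraMap]

theorem isIntegral_of_abs_coeff_le_one {K : Type*} [CommRing K] {x : K} {Q : ℤ[X]} (hQ : Q ≠ 0)
    (hcoeff : ∀ i, |Q.coeff i| ≤ 1) (hx : aeval x Q = 0) : IsIntegral ℤ x := by
  have hlead : IsUnit Q.leadingCoeff := Int.isUnit_iff_abs_eq.mpr
    (le_antisymm (hcoeff _) (Int.one_le_abs (leadingCoeff_ne_zero.mpr hQ)))
  exact ⟨hlead.unit⁻¹ • Q, monic_of_isUnit_leadingCoeff_inv_smul hlead, by
    rw [← aeval_def, Units.smul_def, map_smul, hx, smul_zero]⟩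

theorem exists_dvd_X_pow_sub_one {m : ℤ[X]} (hm : Irreducible m) (hprim : m.IsPrimitive)
    (hX : ¬ m ∣ X) {d D N : ℕ} (hdeg : m.natDegree ≤ d)
    (hdvd : ∀ j, 0 < j → j ≤ N → ∃ Q : ℤ[X], Q ≠ 0 ∧ Q.degree < D ∧ (∀ i, |Q.coeff i| ≤ 1) ∧
      m ∣ expand ℤ j Q)
    (hN : (2 * (2 ^ d * D) + 1) ^ (d + 1) * d < N) :
    ∃ t, 0 < t ∧ t < N ∧ m ∣ X ^ t - 1 := by
  let f : ℚ[X] := m.map (algebraMap ℤ ℚ)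
  have hfirr : Irreducible f := hprim.irreducible_iff_irreducible_map_fraction_map.mp hm
  have : Fact (Irreducible f) := ⟨hfirr⟩
  have : FiniteDimensional ℚ (AdjoinRoot f) := (AdjoinRoot.powerBasis hfirr.ne_zero).finite
  have hfinrank : Module.finrank ℚ (AdjoinRoot f) ≤ d := by
    rw [(AdjoinRoot.powerBasis hfirr.ne_zero).finrank, AdjoinRoot.powerBasis_dim]
    exact natDegree_map_le.trans hdeg
  have hroot : ∀ j, 0 < j → j ≤ N → ∃ Q : ℤ[X], Q ≠ 0 ∧ Q.degree < D ∧ (∀ i, |Q.coeff i| ≤ 1) ∧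
      aeval (AdjoinRoot.root f ^ j) Q = 0 := fun j hj0 hjN => by
    obtain ⟨Q, hQ, hQdeg, hQcoeff, hQdvd⟩ := hdvd j hj0 hjN
    exact ⟨Q, hQ, hQdeg, hQcoeff, by
      rwa [← expand_aeval, aeval_root_map_eq_zero_iff hprim]⟩
  have hroot0 : AdjoinRoot.root f ≠ 0 := by
    rwa [Ne, ← aeval_X (R := ℤ) (AdjoinRoot.root f), aeval_root_map_eq_zero_iff hprim]
  have hint : IsIntegral ℤ (AdjoinRoot.root f) := by
    obtain ⟨Q, hQ, -, hQcoeff, hQroot⟩ := hroot 1 one_pos (Nat.zero_lt_of_lt hN)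
    exact isIntegral_of_abs_coeff_le_one hQ hQcoeff (by rwa [pow_one] at hQroot)
  obtain ⟨t, ht0, htN, ht⟩ := exists_pow_eq_one_of_mahlerMeasure_le hroot0 hint hfinrank (B := D)
    (fun j hj0 hjN => by
      obtain ⟨Q, hQ, hQdeg, hQcoeff, hQroot⟩ := hroot j hj0 hjN
      have hsum := sum_abs_coeff_le hQdeg hQcoeff
      rw [mul_one] at hsum
      exact ⟨Q, hQ, (mahlerMeasure_map_le_sum_abs_coeff Q).trans (by exact_mod_cast hsum), hQroot⟩)
    hN
  refine ⟨t, ht0, htN, (aeval_root_map_eq_zero_iff hprim).mp ?_⟩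
  rw [map_sub, map_pow, aeval_X, map_one, ht, sub_self]

end Kronecker

section SmallMultiples

open Polynomial

theorem exists_irreducible_dvd_map_eq_zero {α β : Type*} [CommRing α] [IsDomain α]
    [UniqueFactorizationMonoid α] [CommRing β] [IsDomain β] (φ : α →+* β) {a : α} (ha : a ≠ 0)
    (hφ : φ a = 0) : ∃ q, Irreducible q ∧ q ∣ a ∧ φ q = 0 := by
  have hprod : φ (UniqueFactorizationMonoid.factors a).prod = 0 := by
    obtain ⟨c, hc⟩ := (UniqueFactorizationMonoid.factors_prod ha).symm.dvd
    rw [hc, map_mul, hφ, zero_mul]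
  rw [map_multiset_prod, Multiset.prod_eq_zero_iff, Multiset.mem_map] at hprod
  obtain ⟨q, hq, hφq⟩ := hprod
  exact ⟨q, UniqueFactorizationMonoid.irreducible_of_factor q hq,
    UniqueFactorizationMonoid.dvd_of_mem_factors hq, hφq⟩

variable {p : ℕ} [Fact p.Prime] {b θ : ZMod p} {s : ℕ → ℤ} {M L d h : ℕ}

theorem exists_irreducible_recurrence (hb : b ≠ 0) (hs : ∀ k, (s k : ZMod p) = b * θ ^ k)
    (hcard : p < h ^ (d + 1)) (hM : 0 < M) (hMh : (d + 1) * h ≤ M) (hL : d < L)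
    (hsmall : ∀ k < L, |s k| * M < p) :
    ∃ m : ℤ[X], Irreducible m ∧ m.IsPrimitive ∧ m.natDegree ≤ d ∧ aeval θ m = 0 ∧
      ∀ Q : ℤ[X], d + Q.natDegree ≤ L → (Q.sum fun _ a => |a|) ≤ M → aeval θ Q = 0 → m ∣ Q := by
  have hM' : (0 : ℤ) < M := mod_cast hM
  obtain ⟨P, hP, hPdeg, hPcoeff, hPθ⟩ := exists_intPolynomial_aeval_eq_zero θ
    (D := d + 1) (H := h) (by rwa [ZMod.card])
  have hPd : P.natDegree ≤ d := Nat.lt_succ_iff.mp ((natDegree_lt_iff_degree_lt hP).mpr hPdeg)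
  have hPsum : (P.sum fun _ a => |a|) ≤ M :=
    (sum_abs_coeff_le hPdeg fun i => (hPcoeff i).le).trans (by exact_mod_cast hMh)
  obtain ⟨m, hprim, hmP, hmrec, hmin⟩ := exists_minimal_windowed_recurrence hP (s := s) (L := L)
    fun k hk => aeval_seqShift_eq_zero_of_small hs hPθ hM' hPsum fun i hi => hsmall _ (by omega)
  have hmd : m.natDegree ≤ d := (natDegree_le_of_dvd hmP hP).trans hPd
  have hmθ : aeval θ m = 0 := by
    have hzero := aeval_seqShift_map_apply (Int.castRingHom (ZMod p)) m s 0
    simp only [eq_intCast, hs] at hzero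
    rw [aeval_seqShift_geometric, hmrec 0 (by omega), Int.cast_zero, pow_zero, mul_one,
      ← algebraMap_int_eq, eval_map_algebraMap] at hzero
    exact (mul_eq_zero.mp hzero).resolve_left hb
  obtain ⟨q, hq, hqm, hqθ⟩ := exists_irreducible_dvd_map_eq_zero
    (aeval θ : ℤ[X] →ₐ[ℤ] ZMod p).toRingHom hprim.ne_zero hmθ
  refine ⟨q, hq, isPrimitive_of_dvd hprim hqm, (natDegree_le_of_dvd hqm hprim.ne_zero).trans hmd,
    hqθ, fun Q hQL hQM hQθ => hqm.trans (hmin Q (by omega) fun k hk => ?_)⟩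
  exact aeval_seqShift_eq_zero_of_small hs hQθ hM' hQM fun i hi => hsmall _ (by omega)

theorem exists_pow_eq_one_of_small_multiples {D N : ℕ} (hb : b ≠ 0) (hθ : θ ≠ 0)
    (hs : ∀ k, (s k : ZMod p) = b * θ ^ k) (hcard : p < h ^ (d + 1)) (hD : p < 2 ^ D)
    (hMh : (d + 1) * h ≤ M) (hMD : D ≤ M) (hN : (2 * (2 ^ d * D) + 1) ^ (d + 1) * d < N)
    (hL : d + N * D ≤ L) (hsmall : ∀ k < L, |s k| * M < p) :
    ∃ t, 0 < t ∧ t < N ∧ θ ^ t = 1 := by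
  have hD0 : 0 < D := Nat.pos_of_ne_zero fun h0 => by
    rw [h0, pow_zero] at hD
    exact hD.not_ge (Fact.out : p.Prime).one_le
  have hND : 0 < N * D := Nat.mul_pos (Nat.zero_lt_of_lt hN) hD0
  obtain ⟨m, hm, hprim, hmd, hmθ, hmin⟩ := exists_irreducible_recurrence hb hs hcard
    (hD0.trans_le hMD) hMh (by omega) hsmall
  have hX : ¬ m ∣ X := fun hdvd => hθ (by simpa using aeval_eq_zero_of_dvd_aeval_eq_zero hdvd hmθ)
  obtain ⟨t, ht0, htN, ht⟩ := exists_dvd_X_pow_sub_one hm hprim hX hmd (D := D) (N := N)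
    (fun j hj0 hjN => by
      obtain ⟨Q, hQ, hQdeg, hQcoeff, hQθ⟩ := exists_intPolynomial_aeval_eq_zero (θ ^ j)
        (D := D) (H := 2) (by rwa [ZMod.card])
      have hQone (i : ℕ) : |Q.coeff i| ≤ 1 := Int.lt_add_one_iff.mp (hQcoeff i)
      have hQD : Q.natDegree * j ≤ N * D := by
        rw [mul_comm]
        exact Nat.mul_le_mul hjN ((natDegree_lt_iff_degree_lt hQ).mpr hQdeg).le
      refine ⟨Q, hQ, hQdeg, hQone, hmin _ (by rw [natDegree_expand]; omega) ?_ ?_⟩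
      · rw [sum_abs_coeff_expand Q hj0]
        exact (sum_abs_coeff_le hQdeg hQone).trans (by rw [mul_one]; exact_mod_cast hMD)
      · rwa [expand_aeval])
    hN
  refine ⟨t, ht0, htN, sub_eq_zero.mp ?_⟩
  simpa using aeval_eq_zero_of_dvd_aeval_eq_zero ht hmθ

end SmallMultiples

section Parameters

theorem pos_of_lt_two_pow_cube {n u : ℕ} (hn : 1 ≤ n) (h : n < 2 ^ u ^ 3) : 0 < u := by
  refine Nat.pos_of_ne_zero fun hu => h.not_ge ?_
  rwa [hu, zero_pow three_ne_zero, pow_zero]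

theorem two_pow_mul_cube_pow_mul_lt (d : ℕ) :
    (2 * (2 ^ d * (d + 1) ^ 3) + 1) ^ (d + 1) * d < 2 ^ (5 * (d + 1) ^ 2) := by
  have hcube : (d + 1) ^ 3 < (2 ^ (d + 1)) ^ 3 :=
    Nat.pow_lt_pow_left Nat.lt_two_pow_self three_ne_zero
  have hbase : 2 * (2 ^ d * (d + 1) ^ 3) + 1 ≤ 2 ^ (4 * (d + 1)) := by
    calc 2 * (2 ^ d * (d + 1) ^ 3) + 1 = 2 ^ (d + 1) * (d + 1) ^ 3 + 1 := by ring
      _ ≤ 2 ^ (d + 1) * (2 ^ (d + 1)) ^ 3 := Nat.mul_lt_mul_of_pos_left hcube (by positivity)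
      _ = 2 ^ (4 * (d + 1)) := by ring
  have hd : d < 2 ^ (d + 1) ^ 2 :=
    Nat.lt_two_pow_self.trans_le (Nat.pow_le_pow_right two_pos (by nlinarith))
  calc (2 * (2 ^ d * (d + 1) ^ 3) + 1) ^ (d + 1) * d
      ≤ (2 ^ (4 * (d + 1))) ^ (d + 1) * d := by gcongr
    _ < (2 ^ (4 * (d + 1))) ^ (d + 1) * 2 ^ (d + 1) ^ 2 :=
        Nat.mul_lt_mul_of_pos_left hd (by positivity)
    _ = 2 ^ (5 * (d + 1) ^ 2) := by
        rw [← pow_mul, ← pow_add]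
        ring_nf

theorem exists_pow_eq_one_of_small_multiples_two_pow {p : ℕ} [Fact p.Prime] {b θ : ZMod p} {u : ℕ}
    (hp : p < 2 ^ u ^ 3) (hb : b ≠ 0) (hθ : θ ≠ 0)
    (hsmall : ∀ k < 2 ^ (9 * u ^ 2), |(b * θ ^ k).valMinAbs| * 2 ^ (3 * u ^ 2) < p) :
    ∃ t, 0 < t ∧ t < 2 ^ (5 * u ^ 2) ∧ θ ^ t = 1 := by
  obtain ⟨d, rfl⟩ : ∃ d, u = d + 1 := Nat.exists_eq_add_one.mpr
    (pos_of_lt_two_pow_cube (Fact.out : p.Prime).one_le hp)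
  set u := d + 1
  set Q := 2 ^ u ^ 2 with hQ
  have hQpow (k : ℕ) : 2 ^ (k * u ^ 2) = Q ^ k := by rw [hQ, ← pow_mul, mul_comm]
  have hpow_le {a : ℕ} (ha : a ≤ u ^ 2) : 2 ^ a ≤ Q := Nat.pow_le_pow_right two_pos ha
  have huQ : u < Q := Nat.lt_two_pow_self.trans_le (hpow_le (Nat.le_self_pow two_ne_zero u))
  have hQ2 : 2 ≤ Q := by omega
  have hND : d + Q ^ 5 * u ^ 3 ≤ Q ^ 9 := by
    calc d + Q ^ 5 * u ^ 3 ≤ Q ^ 8 + Q ^ 5 * Q ^ 3 := by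
          gcongr
          exact (by omega : d ≤ Q).trans (Nat.le_self_pow (by norm_num) Q)
      _ = 2 * Q ^ 8 := by ring
      _ ≤ Q * Q ^ 8 := by gcongr
      _ = Q ^ 9 := by ring
  refine hQpow 5 ▸ exists_pow_eq_one_of_small_multiples (s := fun k => (b * θ ^ k).valMinAbs)
    (M := Q ^ 3) (L := Q ^ 9) (d := d) (h := Q) (D := u ^ 3) hb hθ (fun k => ZMod.coe_valMinAbs _)
    ?_ hp ?_ ?_ ?_ hND fun k hk => ?_
  · rwa [hQ, ← pow_mul, ← pow_succ]
  · calc (d + 1) * Q ≤ Q * Q := by gcongr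
      _ ≤ Q ^ 3 := by rw [← sq]; exact Nat.pow_le_pow_right (by omega) (by norm_num)
  · exact Nat.pow_le_pow_left huQ.le 3
  · rw [← hQpow]
    exact two_pow_mul_cube_pow_mul_lt d
  · have h := hsmall k (by rwa [hQpow])
    rw [← hQpow]
    exact_mod_cast h

end Parameters

section Displacement

variable {X : Type*} [Fintype X]

/-- The Dirichlet energy of `φ` along a permutation `σ`: the squared `ℓ²` distance between `φ` and
its translate `φ ∘ σ`. -/
def dirichletEnergy (σ : Equiv.Perm X) (φ : X → ℝ) : ℝ := ∑ x, (φ x - φ (σ x)) ^ 2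

theorem dirichletEnergy_sub_const (σ : Equiv.Perm X) (φ : X → ℝ) (c : ℝ) :
    dirichletEnergy σ (fun x => φ x - c) = dirichletEnergy σ φ := by
  simp [dirichletEnergy]

/-- The `ℓ²` displacement `σ ↦ ‖φ - φ ∘ σ‖` of a function, a length function on the permutation
group whose square is the Dirichlet energy. -/
noncomputable def displacementSeminorm (φ : X → ℝ) : GroupSeminorm (Equiv.Perm X) where
  toFun σ := ‖WithLp.toLp 2 (φ - φ ∘ σ)‖
  map_one' := by simp
  mul_le' σ τ := by
    have hcomp : ‖WithLp.toLp 2 ((φ - φ ∘ σ) ∘ τ)‖ = ‖WithLp.toLp 2 (φ - φ ∘ σ)‖ :=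
      (LinearIsometryEquiv.piLpCongrLeft 2 ℝ ℝ τ.symm).norm_map (WithLp.toLp 2 (φ - φ ∘ σ))
    have hadd : φ - φ ∘ (σ * τ) = (φ - φ ∘ σ) ∘ τ + (φ - φ ∘ τ) := by
      ext x
      simp
    rw [hadd, WithLp.toLp_add, ← hcomp]
    exact norm_add_le _ _
  inv' σ := by
    have hcomp := (LinearIsometryEquiv.piLpCongrLeft 2 ℝ ℝ σ).norm_map (WithLp.toLp 2 (φ - φ ∘ σ))
    have hneg : (φ - φ ∘ σ) ∘ σ.symm = -(φ - φ ∘ ⇑σ⁻¹) := by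
      ext x
      simp [Equiv.Perm.inv_def]
    rw [← norm_neg, ← WithLp.toLp_neg, ← hneg]
    exact hcomp

theorem displacementSeminorm_sq (φ : X → ℝ) (σ : Equiv.Perm X) :
    displacementSeminorm φ σ ^ 2 = dirichletEnergy σ φ :=
  (EuclideanSpace.norm_sq_eq _).trans (by simp [dirichletEnergy])

variable {G : Type*} [Group G]

theorem groupSeminorm_conj_pow_le (ℓ : GroupSeminorm G) (g a : G) (k : ℕ) :
    ℓ (g ^ k * a * (g ^ k)⁻¹) ≤ 2 * k * ℓ g + ℓ a := by
  induction k with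
  | zero => simp
  | succ k ih =>
    have hconj : g ^ (k + 1) * a * (g ^ (k + 1))⁻¹ = g * (g ^ k * a * (g ^ k)⁻¹) * g⁻¹ := by
      rw [pow_succ']
      group
    have hright := map_mul_le_add ℓ (g * (g ^ k * a * (g ^ k)⁻¹)) g⁻¹
    have hleft := map_mul_le_add ℓ g (g ^ k * a * (g ^ k)⁻¹)
    rw [map_inv_eq_map] at hright
    rw [hconj]
    push_cast
    linarith

end Displacement

section ReflectScale

variable {F : Type*} [Field F]

/-- The affine permutation `y ↦ (1 - y) * γ`. Inversion `y = x⁻¹` conjugates it to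
`x ↦ x / (x - 1) * γ⁻¹`, up to the points `0` and `1`. -/
def reflectScale (γ : Fˣ) : Equiv.Perm F := (Equiv.subLeft 1).trans γ.mulRight

theorem reflectScale_apply (γ : Fˣ) (y : F) : reflectScale γ y = (1 - y) * γ := rfl

theorem reflectScale_inv_mul_reflectScale (γ : Fˣ) :
    reflectScale γ⁻¹ * reflectScale γ = Equiv.addRight ((γ : F)⁻¹ - 1) := by
  ext y
  simp only [Equiv.Perm.mul_apply, reflectScale_apply, Units.val_inv_eq_inv_val,
    Equiv.coe_addRight]
  linear_combination (y - 1) * mul_inv_cancel₀ γ.ne_zero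

theorem reflectScale_mul_addRight (γ : Fˣ) (a : F) :
    reflectScale γ * Equiv.addRight a = Equiv.addRight (a * -γ) * reflectScale γ := by
  ext y
  simp only [Equiv.Perm.mul_apply, reflectScale_apply, Equiv.coe_addRight]
  ring

theorem reflectScale_pow_mul_addRight (γ : Fˣ) (a : F) (k : ℕ) :
    reflectScale γ ^ k * Equiv.addRight a =
      Equiv.addRight (a * (-γ : F) ^ k) * reflectScale γ ^ k := by
  induction k with
  | zero => simp
  | succ k ih =>
    rw [pow_succ', mul_assoc, ih, ← mul_assoc, reflectScale_mul_addRight, mul_assoc a, ← pow_succ,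
      mul_assoc]

theorem map_addRight_le (ℓ : GroupSeminorm (Equiv.Perm F)) (γ : Fˣ) (k : ℕ) :
    ℓ (Equiv.addRight (((γ : F)⁻¹ - 1) * (-γ : F) ^ k)) ≤
      (2 * k + 1) * ℓ (reflectScale γ) + ℓ (reflectScale γ⁻¹) := by
  have hconj := groupSeminorm_conj_pow_le ℓ (reflectScale γ) (Equiv.addRight ((γ : F)⁻¹ - 1)) k
  have hmul := map_mul_le_add ℓ (reflectScale γ⁻¹) (reflectScale γ)
  rw [reflectScale_pow_mul_addRight, mul_inv_cancel_right] at hconj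
  rw [reflectScale_inv_mul_reflectScale] at hmul
  linarith

theorem dirichletEnergy_addRight_le [Fintype F] (γ : Fˣ) (φ : F → ℝ) (k : ℕ) :
    dirichletEnergy (Equiv.addRight (((γ : F)⁻¹ - 1) * (-γ : F) ^ k)) φ ≤
      (2 * k + 2) ^ 2 *
        (dirichletEnergy (reflectScale γ) φ + dirichletEnergy (reflectScale γ⁻¹) φ) := by
  simp only [← displacementSeminorm_sq]
  set x := displacementSeminorm φ (reflectScale γ)
  set y := displacementSeminorm φ (reflectScale γ⁻¹)
  calc displacementSeminorm φ (Equiv.addRight (((γ : F)⁻¹ - 1) * (-γ : F) ^ k)) ^ 2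
      ≤ ((2 * k + 1) * x + y) ^ 2 :=
        pow_le_pow_left₀ (apply_nonneg _ _) (map_addRight_le _ γ k) 2
    _ ≤ ((2 * k + 1) ^ 2 + 1) * (x ^ 2 + y ^ 2) := by
        linear_combination sq_nonneg (x - (2 * k + 1) * y)
    _ ≤ (2 * k + 2) ^ 2 * (x ^ 2 + y ^ 2) := by
        gcongr
        linarith [(Nat.cast_nonneg k : (0 : ℝ) ≤ k)]

end ReflectScale

section Fourier

variable {p : ℕ} [NeZero p]

theorem sum_norm_sq_sum_stdAddChar_mul (f : ZMod p → ℂ) :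
    ∑ ξ, ‖∑ y, ZMod.stdAddChar (ξ * y) * f y‖ ^ 2 = p * ∑ y, ‖f y‖ ^ 2 := by
  have hexpand (ξ : ZMod p) : ((‖∑ y, ZMod.stdAddChar (ξ * y) * f y‖ ^ 2 : ℝ) : ℂ) =
      ∑ y, ∑ z, ZMod.stdAddChar (ξ * (y - z)) * (f y * starRingEnd ℂ (f z)) := by
    push_cast
    rw [← Complex.mul_conj', map_sum, Finset.sum_mul_sum]
    refine Finset.sum_congr rfl fun y _ => Finset.sum_congr rfl fun z _ => ?_
    rw [RingHom.map_mul, mul_sub, sub_eq_add_neg, AddChar.map_add_eq_mul, AddChar.map_neg_eq_conj]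
    ring
  have horth (y : ZMod p) :
      ∑ z, ∑ ξ, ZMod.stdAddChar (ξ * (y - z)) * (f y * starRingEnd ℂ (f z)) =
        p * (‖f y‖ ^ 2 : ℝ) := by
    simp_rw [← Finset.sum_mul, AddChar.sum_mulShift _ (ZMod.isPrimitive_stdAddChar p), sub_eq_zero]
    simp [Complex.mul_conj', ZMod.card]
  have hcomplex : ((∑ ξ, ‖∑ y, ZMod.stdAddChar (ξ * y) * f y‖ ^ 2 : ℝ) : ℂ) =
      (p * ∑ y, ‖f y‖ ^ 2 : ℝ) := by
    rw [Complex.ofReal_sum]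
    simp_rw [hexpand]
    rw [Finset.sum_comm, Complex.ofReal_mul, Complex.ofReal_sum, Finset.mul_sum]
    refine Finset.sum_congr rfl fun y _ => ?_
    rw [Finset.sum_comm, horth, Complex.ofReal_natCast]
  exact_mod_cast hcomplex

theorem four_mul_abs_valMinAbs_div_le_norm_stdAddChar_sub_one (a : ZMod p) :
    4 * |(a.valMinAbs : ℝ)| / p ≤ ‖ZMod.stdAddChar a - 1‖ := by
  have hp : (0 : ℝ) < p := Nat.cast_pos.mpr (NeZero.pos p)
  set v := a.valMinAbs with hv
  have hexp : ZMod.stdAddChar a = Complex.exp (Complex.I * ((2 * Real.pi * v / p : ℝ) : ℂ)) := by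
    rw [← ZMod.coe_valMinAbs a, ← hv, ZMod.stdAddChar_coe]
    push_cast
    ring_nf
  have hv_le : |(v : ℝ)| * 2 ≤ p := by
    obtain ⟨hlo, hhi⟩ := ZMod.valMinAbs_mem_Ioc a
    have h : |v * 2| ≤ (p : ℤ) := abs_le.mpr ⟨hlo.le, hhi⟩
    rw [abs_mul, abs_two] at h
    exact_mod_cast h
  have hangle : |2 * Real.pi * v / p / 2| = Real.pi * |(v : ℝ)| / p := by
    rw [show 2 * Real.pi * v / p / 2 = Real.pi * v / p by ring, abs_div, abs_mul,
      abs_of_pos Real.pi_pos, abs_of_pos hp]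
  have hsin := Real.mul_abs_le_abs_sin (x := 2 * Real.pi * v / p / 2) (by
    rw [hangle, div_le_iff₀ hp]
    nlinarith [Real.pi_pos])
  rw [hexp, Complex.norm_exp_I_mul_ofReal_sub_one, norm_mul, Real.norm_eq_abs, Real.norm_eq_abs,
    abs_two]
  calc 4 * |(v : ℝ)| / p = 2 * (2 / Real.pi * (Real.pi * |(v : ℝ)| / p)) := by
        field_simp
        ring
    _ ≤ 2 * |Real.sin (2 * Real.pi * v / p / 2)| := by
        rw [← hangle]
        gcongr

theorem sum_norm_stdAddChar_sub_one_sq_mul (f : ZMod p → ℝ) (a : ZMod p) :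
    ∑ ξ, ‖ZMod.stdAddChar (-ξ * a) - 1‖ ^ 2 * ‖∑ y, ZMod.stdAddChar (ξ * y) * (f y : ℂ)‖ ^ 2 =
      p * dirichletEnergy (Equiv.addRight a) f := by
  have htranslate (ξ : ZMod p) :
      ∑ y, ZMod.stdAddChar (ξ * y) * ((f (y + a) - f y : ℝ) : ℂ) =
        (ZMod.stdAddChar (-ξ * a) - 1) * ∑ y, ZMod.stdAddChar (ξ * y) * (f y : ℂ) := by
    rw [sub_one_mul, Finset.mul_sum, ← Equiv.sum_comp (Equiv.addRight a)
      (fun y => ZMod.stdAddChar (-ξ * a) * (ZMod.stdAddChar (ξ * y) * (f y : ℂ))),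
      ← Finset.sum_sub_distrib]
    refine Finset.sum_congr rfl fun y _ => ?_
    rw [← mul_assoc, ← AddChar.map_add_eq_mul, Equiv.coe_addRight, Complex.ofReal_sub, mul_sub]
    ring_nf
  have hparseval := sum_norm_sq_sum_stdAddChar_mul (fun y => ((f (y + a) - f y : ℝ) : ℂ))
  simp_rw [htranslate, norm_mul, mul_pow, Complex.norm_real, Real.norm_eq_abs, sq_abs] at hparseval
  rw [hparseval]
  simp only [dirichletEnergy, Equiv.coe_addRight, sub_sq_comm]

theorem sum_sq_le_sum_dirichletEnergy_addRight {ι : Type*} {s : Finset ι} {a : ι → ZMod p}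
    {M : ℝ} {f : ZMod p → ℝ} (hf : ∑ y, f y = 0)
    (hs : ∀ ξ ≠ 0, ∃ i ∈ s, 1 ≤ M * ‖ZMod.stdAddChar (ξ * a i) - 1‖) :
    ∑ y, f y ^ 2 ≤ M ^ 2 * ∑ i ∈ s, dirichletEnergy (Equiv.addRight (a i)) f := by
  have hp : (0 : ℝ) < p := Nat.cast_pos.mpr (NeZero.pos p)
  set F : ZMod p → ℂ := fun ξ => ∑ y, ZMod.stdAddChar (ξ * y) * (f y : ℂ) with hF
  have hparseval := sum_norm_sq_sum_stdAddChar_mul (fun y => (f y : ℂ))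
  simp_rw [Complex.norm_real, Real.norm_eq_abs, sq_abs] at hparseval
  have hmode (ξ : ZMod p) :
      ‖F ξ‖ ^ 2 ≤ ∑ i ∈ s, (M * ‖ZMod.stdAddChar (-ξ * a i) - 1‖) ^ 2 * ‖F ξ‖ ^ 2 := by
    rcases eq_or_ne ξ 0 with rfl | hξ
    · have hF0 : F 0 = 0 := by simp [hF, ← Complex.ofReal_sum, hf]
      simp [hF0]
    · obtain ⟨i, hi, hle⟩ := hs (-ξ) (neg_ne_zero.mpr hξ)
      exact (le_mul_of_one_le_left (sq_nonneg _) (one_le_pow₀ hle)).trans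
        (Finset.single_le_sum (f := fun i => (M * ‖ZMod.stdAddChar (-ξ * a i) - 1‖) ^ 2 * ‖F ξ‖ ^ 2)
          (fun _ _ => by positivity) hi)
  refine le_of_mul_le_mul_left ?_ hp
  calc p * ∑ y, f y ^ 2 = ∑ ξ, ‖F ξ‖ ^ 2 := hparseval.symm
    _ ≤ ∑ ξ, ∑ i ∈ s, (M * ‖ZMod.stdAddChar (-ξ * a i) - 1‖) ^ 2 * ‖F ξ‖ ^ 2 :=
        Finset.sum_le_sum fun ξ _ => hmode ξ
    _ = M ^ 2 * ∑ i ∈ s, ∑ ξ, ‖ZMod.stdAddChar (-ξ * a i) - 1‖ ^ 2 * ‖F ξ‖ ^ 2 := by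
        rw [Finset.sum_comm, Finset.mul_sum]
        simp_rw [mul_pow, Finset.mul_sum, mul_assoc]
    _ = p * (M ^ 2 * ∑ i ∈ s, dirichletEnergy (Equiv.addRight (a i)) f) := by
        simp_rw [hF, sum_norm_stdAddChar_sub_one_sq_mul, ← Finset.mul_sum]
        ring

end Fourier

section ReflectScalePoincare

variable {p : ℕ} [Fact p.Prime] {γ : (ZMod p)ˣ} {u : ℕ}

theorem exists_one_le_norm_stdAddChar_sub_one (hp : p < 2 ^ u ^ 3)
    (hγ : 2 ^ (5 * u ^ 2 + 1) ≤ orderOf γ) {ξ : ZMod p} (hξ : ξ ≠ 0) :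
    ∃ k ∈ Finset.range (2 ^ (9 * u ^ 2)), (1 : ℝ) ≤
      2 ^ (3 * u ^ 2) * ‖ZMod.stdAddChar (ξ * (((γ : ZMod p)⁻¹ - 1) * (-γ : ZMod p) ^ k)) - 1‖ := by
  have hp0 : (0 : ℝ) < p := Nat.cast_pos.mpr (Fact.out : p.Prime).pos
  have hγ1 : (γ : ZMod p)⁻¹ - 1 ≠ 0 := fun h => by
    rw [sub_eq_zero, inv_eq_one, Units.val_eq_one] at h
    rw [h, orderOf_one] at hγ
    exact absurd hγ (Nat.one_lt_two_pow (by omega)).not_ge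
  obtain ⟨k, hk, hlarge⟩ : ∃ k < 2 ^ (9 * u ^ 2),
      (p : ℤ) ≤ |(ξ * ((γ : ZMod p)⁻¹ - 1) * (-γ : ZMod p) ^ k).valMinAbs| * 2 ^ (3 * u ^ 2) := by
    by_contra! hsmall
    obtain ⟨t, ht0, htN, ht⟩ := exists_pow_eq_one_of_small_multiples_two_pow hp
      (mul_ne_zero hξ hγ1) (neg_ne_zero.mpr γ.ne_zero) hsmall
    have hpow : γ ^ (2 * t) = 1 := by
      ext
      rw [Units.val_pow_eq_pow_val, Units.val_one, pow_mul, ← neg_sq, ← pow_mul, mul_comm, pow_mul,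
        ht, one_pow]
    have := orderOf_le_of_pow_eq_one (by omega) hpow
    rw [pow_succ] at hγ
    omega
  refine ⟨k, Finset.mem_range.mpr hk, ?_⟩
  rw [← mul_assoc]
  set v := (ξ * ((γ : ZMod p)⁻¹ - 1) * (-γ : ZMod p) ^ k).valMinAbs
  have hlarge_real : (p : ℝ) ≤ |(v : ℝ)| * 2 ^ (3 * u ^ 2) := by exact_mod_cast hlarge
  calc (1 : ℝ) ≤ 2 ^ (3 * u ^ 2) * (4 * |(v : ℝ)| / p) := by
        rw [← mul_div_assoc, one_le_div hp0]
        linarith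
    _ ≤ _ := by
        gcongr
        exact four_mul_abs_valMinAbs_div_le_norm_stdAddChar_sub_one _

theorem sum_sq_le_dirichletEnergy_reflectScale (hp : p < 2 ^ u ^ 3)
    (hγ : 2 ^ (5 * u ^ 2 + 1) ≤ orderOf γ) {f : ZMod p → ℝ} (hf : ∑ y, f y = 0) :
    ∑ y, f y ^ 2 ≤ 2 ^ (35 * u ^ 2) *
      (dirichletEnergy (reflectScale γ) f + dirichletEnergy (reflectScale γ⁻¹) f) := by
  set E := dirichletEnergy (reflectScale γ) f + dirichletEnergy (reflectScale γ⁻¹) f with hE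
  have hE0 : 0 ≤ E := by
    simp only [hE, dirichletEnergy]
    positivity
  set L := 2 ^ (9 * u ^ 2) with hL
  have hle (k : ℕ) (hk : k ∈ Finset.range L) :
      dirichletEnergy (Equiv.addRight (((γ : ZMod p)⁻¹ - 1) * (-γ : ZMod p) ^ k)) f ≤
        (2 * L) ^ 2 * E := by
    refine (dirichletEnergy_addRight_le γ f k).trans ?_
    have hkL : (k : ℝ) + 1 ≤ L := by exact_mod_cast Finset.mem_range.mp hk
    gcongr
    linarith
  have hfour : (4 : ℝ) ≤ 2 ^ (2 * u ^ 2) := by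
    have hu : 0 < u ^ 2 := pow_pos (pos_of_lt_two_pow_cube (Fact.out : p.Prime).one_le hp) 2
    calc (4 : ℝ) = 2 ^ 2 := by norm_num
      _ ≤ 2 ^ (2 * u ^ 2) := pow_le_pow_right₀ one_le_two (by omega)
  calc ∑ y, f y ^ 2
      ≤ (2 ^ (3 * u ^ 2)) ^ 2 * ∑ k ∈ Finset.range L,
          dirichletEnergy (Equiv.addRight (((γ : ZMod p)⁻¹ - 1) * (-γ : ZMod p) ^ k)) f :=
        sum_sq_le_sum_dirichletEnergy_addRight hf fun ξ hξ =>
          exists_one_le_norm_stdAddChar_sub_one hp hγ hξ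
    _ ≤ (2 ^ (3 * u ^ 2)) ^ 2 * (L * ((2 * L) ^ 2 * E)) := by
        gcongr
        simpa only [Finset.card_range, nsmul_eq_mul] using Finset.sum_le_card_nsmul _ _ _ hle
    _ = 4 * 2 ^ (33 * u ^ 2) * E := by
        rw [hL]
        push_cast
        ring
    _ ≤ 2 ^ (2 * u ^ 2) * 2 ^ (33 * u ^ 2) * E := by gcongr
    _ = 2 ^ (35 * u ^ 2) * E := by ring

end ReflectScalePoincare

section StarScale

variable {F : Type*} [Field F] [DecidableEq F]

/-- The involution `f_*` of `F`, equal to `x ↦ x / (x - 1)` away from its fixed point `1`. -/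
def starPerm : Equiv.Perm F :=
  Function.Involutive.toPerm (fun x => if x = 1 then 1 else x / (x - 1)) fun x => by
    rcases eq_or_ne x 1 with rfl | hx
    · simp
    · have hsub : x - 1 ≠ 0 := sub_ne_zero.mpr hx
      have himage : x / (x - 1) - 1 = (x - 1)⁻¹ := by
        field_simp
        ring
      have hne : x / (x - 1) ≠ 1 := sub_ne_zero.mp (himage ▸ inv_ne_zero hsub)
      simp only [if_neg hx, if_neg hne, himage, div_inv_eq_mul, div_mul_cancel₀ x hsub]

/-- The move `x ↦ f_*(x) * γ` of the chain, as a permutation of `F`. -/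
def starScale (γ : Fˣ) : Equiv.Perm F := starPerm.trans γ.mulRight

theorem starScale_apply (γ : Fˣ) (x : F) :
    starScale γ x = (if x = 1 then 1 else x / (x - 1)) * γ := rfl

theorem starScale_zero (γ : Fˣ) : starScale γ 0 = 0 := by simp [starScale_apply]

/-- Inversion with the value at `0` changed from `0` to `1`. It carries `reflectScale γ` to
`starScale γ⁻¹` everywhere except at the point `1`. -/
def invOrOne (y : F) : F := if y = 0 then 1 else y⁻¹

theorem invOrOne_reflectScale (γ : Fˣ) {y : F} (hy : y ≠ 1) :
    invOrOne (reflectScale γ y) = starScale γ⁻¹ (invOrOne y) := by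
  have hsub : 1 - y ≠ 0 := sub_ne_zero.mpr hy.symm
  have hmul : (1 - y) * γ ≠ 0 := mul_ne_zero hsub γ.ne_zero
  rcases eq_or_ne y 0 with rfl | hy0
  · simp [invOrOne, reflectScale_apply, starScale_apply]
  · have hinv : y⁻¹ - 1 = (1 - y) / y := by field_simp
    rw [invOrOne, invOrOne, reflectScale_apply, starScale_apply, if_neg hmul, if_neg hy0,
      if_neg (inv_ne_one.mpr hy), hinv, Units.val_inv_eq_inv_val]
    field_simp

variable [Fintype F]

theorem sum_comp_invOrOne (g : F → ℝ) : ∑ y, g (invOrOne y) + g 0 = ∑ x, g x + g 1 := by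
  rw [← Equiv.sum_comp (Equiv.inv F) g, ← Finset.sum_erase_add _ _ (Finset.mem_univ (0 : F)),
    ← Finset.sum_erase_add _ (fun y => g (Equiv.inv F y)) (Finset.mem_univ (0 : F))]
  have heq : ∀ y ∈ Finset.univ.erase (0 : F), g (invOrOne y) = g (Equiv.inv F y) := fun y hy => by
    rw [invOrOne, if_neg (Finset.ne_of_mem_erase hy), Equiv.inv_apply]
  rw [Finset.sum_congr rfl heq]
  simp only [Equiv.inv_apply, inv_zero, invOrOne, if_true]
  ring

theorem dirichletEnergy_reflectScale_comp_invOrOne (γ : Fˣ) (φ : F → ℝ) :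
    dirichletEnergy (reflectScale γ) (φ ∘ invOrOne) = dirichletEnergy (starScale γ⁻¹) φ := by
  have hsum := sum_comp_invOrOne fun x => (φ x - φ (starScale γ⁻¹ x)) ^ 2
  rw [starScale_zero, sub_self, zero_pow two_ne_zero, add_zero] at hsum
  have hone : invOrOne (reflectScale γ 1) = invOrOne (1 : F) := by
    simp [invOrOne, reflectScale_apply]
  have hinv : invOrOne (1 : F) = 1 := by simp [invOrOne]
  rw [← add_right_cancel_iff (a := (φ 1 - φ (starScale γ⁻¹ 1)) ^ 2), dirichletEnergy,
    dirichletEnergy, ← hsum, ← Finset.sum_erase_add _ _ (Finset.mem_univ (1 : F)),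
    ← Finset.sum_erase_add _ (fun y => (φ (invOrOne y) - φ (starScale γ⁻¹ (invOrOne y))) ^ 2)
      (Finset.mem_univ (1 : F))]
  simp only [Function.comp_apply, hone, hinv, sub_self]
  rw [zero_pow two_ne_zero, add_zero]
  congr 1
  refine Finset.sum_congr rfl fun y hy => ?_
  rw [invOrOne_reflectScale γ (Finset.ne_of_mem_erase hy)]

theorem sum_sq_le_dirichletEnergy_starScale_of_reflectScale {γ : Fˣ} {K : ℝ}
    (hK : ∀ f : F → ℝ, ∑ y, f y = 0 → ∑ y, f y ^ 2 ≤
      K * (dirichletEnergy (reflectScale γ) f + dirichletEnergy (reflectScale γ⁻¹) f))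
    {φ : F → ℝ} (hφ0 : φ 0 = 0) (hφ : ∑ x, φ x = 0) :
    ∑ x, φ x ^ 2 ≤
      K * (dirichletEnergy (starScale γ) φ + dirichletEnergy (starScale γ⁻¹) φ) := by
  set q := (Fintype.card F : ℝ)
  have hq : 1 ≤ q := Nat.one_le_cast.mpr Fintype.card_pos
  set c : ℝ := φ 1 / q
  have hc : q * c = φ 1 := mul_div_cancel₀ _ (by positivity)
  set ψ : F → ℝ := fun x => φ x - c with hψ
  have hmean : ∑ y, (ψ ∘ invOrOne) y = 0 := by
    have h := sum_comp_invOrOne ψ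
    have hsum : ∑ x, ψ x = -(q * c) := by simp [hψ, hφ, q]
    rw [hsum] at h
    simp only [hψ, hφ0] at h
    simp only [Function.comp_apply, hψ]
    linarith
  have hsq : ∑ x, φ x ^ 2 ≤ ∑ y, (ψ ∘ invOrOne) y ^ 2 := by
    have h := sum_comp_invOrOne fun x => ψ x ^ 2
    have hsum : ∑ x, ψ x ^ 2 = ∑ x, φ x ^ 2 + q * c ^ 2 := by
      simp only [hψ, sub_sq, Finset.sum_add_distrib, Finset.sum_sub_distrib, ← Finset.mul_sum,
        ← Finset.sum_mul, hφ, Finset.sum_const, Finset.card_univ, nsmul_eq_mul]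
      ring
    have hψ0 : ψ 0 ^ 2 = c ^ 2 := by simp [hψ, hφ0]
    simp only [Function.comp_apply]
    nlinarith [sq_nonneg c, sq_nonneg (ψ 1)]
  have henergy := dirichletEnergy_reflectScale_comp_invOrOne (φ := ψ)
  simp only [hψ, dirichletEnergy_sub_const] at henergy
  calc ∑ x, φ x ^ 2 ≤ ∑ y, (ψ ∘ invOrOne) y ^ 2 := hsq
    _ ≤ _ := hK _ hmean
    _ = _ := by rw [henergy, henergy, inv_inv, add_comm]

end StarScale

section LazyChain

variable {X : Type*} (σ ρ : Equiv.Perm X)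

/-- The lazy transition which stays put with probability `1 / 2` and otherwise applies `σ` or `ρ`
with equal probability; the two independent coins are drawn uniformly from `Bool × Bool`. -/
noncomputable def lazyStep (x : X) : PMF X :=
  PMF.map (fun b : Bool × Bool => if b.1 then x else if b.2 then σ x else ρ x)
    (PMF.uniformOfFintype (Bool × Bool))

/-- The action of `lazyStep σ ρ` on densities. -/
noncomputable def lazyAverage : Module.End ℝ (X → ℝ) :=
  (1 / 2 : ℝ) • 1 + (1 / 4 : ℝ) • LinearMap.funLeft ℝ ℝ σ.symm +
    (1 / 4 : ℝ) • LinearMap.funLeft ℝ ℝ ρ.symm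

theorem lazyAverage_apply (φ : X → ℝ) (z : X) :
    lazyAverage σ ρ φ z = 1 / 2 * φ z + 1 / 4 * φ (σ.symm z) + 1 / 4 * φ (ρ.symm z) := rfl

theorem toReal_lazyStep_apply [DecidableEq X] (x z : X) :
    (lazyStep σ ρ x z).toReal = (if z = x then 1 / 2 else 0) +
      (if σ.symm z = x then 1 / 4 else 0) + (if ρ.symm z = x then 1 / 4 else 0) := by
  have hcoin : ((Fintype.card (Bool × Bool) : ENNReal)⁻¹).toReal = 1 / 4 := by simp
  rw [lazyStep, PMF.map_apply, tsum_fintype, ENNReal.toReal_sum fun b _ => by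
    split_ifs <;> simp]
  simp only [Fintype.sum_prod_type, Fintype.sum_bool, PMF.uniformOfFintype_apply, if_true,
    Bool.false_eq_true, if_false, Equiv.symm_apply_eq, apply_ite ENNReal.toReal, hcoin,
    ENNReal.toReal_zero]
  split_ifs <;> norm_num

variable {σ ρ} in
theorem lazyAverage_pow_apply_of_fixed {o : X} (hσ : σ o = o) (hρ : ρ o = o) (φ : X → ℝ)
    (n : ℕ) : (lazyAverage σ ρ ^ n) φ o = φ o := by
  induction n with
  | zero => simp
  | succ n ih =>
    rw [pow_succ', Module.End.mul_apply, lazyAverage_apply, σ.symm_apply_eq.mpr hσ.symm,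
      ρ.symm_apply_eq.mpr hρ.symm, ih]
    ring

theorem toReal_bind_lazyStep (μ : PMF X) (z : X) :
    ((μ.bind (lazyStep σ ρ)) z).toReal = lazyAverage σ ρ (fun x => (μ x).toReal) z := by
  classical
  have hsingle (w : X) (a : ℝ) :
      HasSum (fun x => if w = x then (μ x).toReal * a else 0) ((μ w).toReal * a) := by
    simpa only [if_true] using hasSum_single (f := fun x => if w = x then (μ x).toReal * a else 0) w
      fun x hx => if_neg hx.symm
  rw [PMF.bind_apply, ENNReal.tsum_toReal_eq fun x =>
    ENNReal.mul_ne_top (PMF.apply_ne_top _ _) (PMF.apply_ne_top _ _)]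
  simp only [ENNReal.toReal_mul, toReal_lazyStep_apply, mul_add, mul_ite, mul_zero]
  rw [(((hsingle _ _).add (hsingle _ _)).add (hsingle _ _)).tsum_eq, lazyAverage_apply]
  ring

theorem toReal_walkDist_lazyStep [DecidableEq X] (x₀ : X) (n : ℕ) :
    (fun x => (walkDist (lazyStep σ ρ) x₀ n x).toReal) =
      (lazyAverage σ ρ ^ n) (Pi.single x₀ 1) := by
  induction n with
  | zero =>
    ext x
    simp [walkDist, PMF.pure_apply, Pi.single_apply, apply_ite ENNReal.toReal]
  | succ n ih =>
    ext x
    rw [pow_succ', Module.End.mul_apply, ← ih, ← toReal_bind_lazyStep]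
    simp only [walkDist, Function.iterate_succ_apply']

variable [Fintype X]

theorem sum_lazyAverage_pow_apply (φ : X → ℝ) (n : ℕ) :
    ∑ x, (lazyAverage σ ρ ^ n) φ x = ∑ x, φ x := by
  induction n with
  | zero => simp
  | succ n ih =>
    simp only [pow_succ', Module.End.mul_apply, lazyAverage_apply, Finset.sum_add_distrib,
      ← Finset.mul_sum, Equiv.sum_comp σ.symm, Equiv.sum_comp ρ.symm, ih]
    ring

theorem sum_sq_lazyAverage_le (φ : X → ℝ) :
    ∑ z, lazyAverage σ ρ φ z ^ 2 ≤
      ∑ x, φ x ^ 2 - 1 / 8 * (dirichletEnergy σ φ + dirichletEnergy ρ φ) := by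
  have hconvex (z : X) : lazyAverage σ ρ φ z ^ 2 ≤
      1 / 2 * φ z ^ 2 + 1 / 4 * φ (σ.symm z) ^ 2 + 1 / 4 * φ (ρ.symm z) ^ 2
        - 1 / 8 * (φ (σ.symm z) - φ z) ^ 2 - 1 / 8 * (φ (ρ.symm z) - φ z) ^ 2 := by
    rw [lazyAverage_apply]
    linear_combination 1 / 16 * sq_nonneg (φ (σ.symm z) - φ (ρ.symm z))
  have henergy (τ : Equiv.Perm X) : ∑ z, (φ (τ.symm z) - φ z) ^ 2 = dirichletEnergy τ φ := by
    simp [← Equiv.sum_comp τ (fun z => (φ (τ.symm z) - φ z) ^ 2), dirichletEnergy]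
  refine (Finset.sum_le_sum fun z _ => hconvex z).trans (le_of_eq ?_)
  simp only [Finset.sum_sub_distrib, Finset.sum_add_distrib, ← Finset.mul_sum, henergy,
    Equiv.sum_comp σ.symm (fun z => φ z ^ 2), Equiv.sum_comp ρ.symm (fun z => φ z ^ 2)]
  ring

variable {σ ρ} {o : X} {K : ℝ}

theorem sum_sq_lazyAverage_pow_le (hσ : σ o = o) (hρ : ρ o = o) (hK : 0 < K)
    (hpoincare : ∀ φ : X → ℝ, φ o = 0 → ∑ x, φ x = 0 →
      ∑ x, φ x ^ 2 ≤ K * (dirichletEnergy σ φ + dirichletEnergy ρ φ))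
    {φ : X → ℝ} (hφo : φ o = 0) (hφ : ∑ x, φ x = 0) (n : ℕ) :
    ∑ x, (lazyAverage σ ρ ^ n) φ x ^ 2 ≤ Real.exp (-(n / (8 * K))) * ∑ x, φ x ^ 2 := by
  induction n with
  | zero => simp
  | succ n ih =>
    set ψ := (lazyAverage σ ρ ^ n) φ with hψ
    have hgap := hpoincare ψ (by rw [hψ, lazyAverage_pow_apply_of_fixed hσ hρ, hφo])
      (by rw [hψ, sum_lazyAverage_pow_apply, hφ])
    have hgap' : 1 / (8 * K) * ∑ x, ψ x ^ 2 ≤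
        1 / 8 * (dirichletEnergy σ ψ + dirichletEnergy ρ ψ) := by
      rw [div_mul_eq_mul_div, div_le_iff₀ (by positivity)]
      linarith
    calc ∑ x, (lazyAverage σ ρ ^ (n + 1)) φ x ^ 2 = ∑ x, lazyAverage σ ρ ψ x ^ 2 := by
          rw [pow_succ', Module.End.mul_apply]
      _ ≤ (-(1 / (8 * K)) + 1) * ∑ x, ψ x ^ 2 := by
          linarith [sum_sq_lazyAverage_le σ ρ ψ]
      _ ≤ Real.exp (-(1 / (8 * K))) * (Real.exp (-(n / (8 * K))) * ∑ x, φ x ^ 2) := by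
          gcongr
          exact Real.add_one_le_exp _
      _ = Real.exp (-((n + 1 : ℕ) / (8 * K))) * ∑ x, φ x ^ 2 := by
          rw [← mul_assoc, ← Real.exp_add]
          push_cast
          ring_nf

section UniformOff

variable [DecidableEq X]

/-- The density of the uniform distribution on the complement of a point. -/
noncomputable def uniformOff (o : X) : X → ℝ :=
  fun x => if x = o then 0 else 1 / ((Fintype.card X : ℝ) - 1)

theorem sum_uniformOff_of_notMem {A : Finset X} (hA : o ∉ A) :
    ∑ x ∈ A, uniformOff o x = A.card / ((Fintype.card X : ℝ) - 1) := by
  have hconst : ∀ x ∈ A, uniformOff o x = 1 / ((Fintype.card X : ℝ) - 1) :=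
    fun x hx => if_neg (ne_of_mem_of_not_mem hx hA)
  rw [Finset.sum_congr rfl hconst, Finset.sum_const, nsmul_eq_mul, mul_one_div]

theorem sum_uniformOff [Nontrivial X] (o : X) : ∑ x, uniformOff o x = 1 := by
  have hcard : (1 : ℝ) < Fintype.card X := Nat.one_lt_cast.mpr Fintype.one_lt_card
  have hself : uniformOff o o = 0 := if_pos rfl
  rw [← Finset.sum_erase _ hself, sum_uniformOff_of_notMem (Finset.notMem_erase o _),
    Finset.card_erase_of_mem (Finset.mem_univ o), Finset.card_univ, Nat.cast_pred Fintype.card_pos,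
    div_self (sub_ne_zero.mpr hcard.ne')]

theorem lazyAverage_pow_uniformOff (hσ : σ o = o) (hρ : ρ o = o) (n : ℕ) :
    (lazyAverage σ ρ ^ n) (uniformOff o) = uniformOff o := by
  have hstep : lazyAverage σ ρ (uniformOff o) = uniformOff o := by
    ext z
    have hσz : σ.symm z = o ↔ z = o := by rw [σ.symm_apply_eq, hσ]
    have hρz : ρ.symm z = o ↔ z = o := by rw [ρ.symm_apply_eq, hρ]
    simp only [lazyAverage_apply, uniformOff, hσz, hρz]
    ring
  rw [Module.End.pow_apply]
  exact Function.iterate_fixed hstep n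

theorem sum_sq_single_sub_uniformOff_le [Nontrivial X] {x₀ : X} (hx₀ : x₀ ≠ o) :
    ∑ x, ((Pi.single x₀ 1 : X → ℝ) x - uniformOff o x) ^ 2 ≤ 1 := by
  have hcard : (1 : ℝ) < Fintype.card X := Nat.one_lt_cast.mpr Fintype.one_lt_card
  set m : ℝ := 1 / ((Fintype.card X : ℝ) - 1) with hm
  have hm0 : 0 ≤ m := one_div_nonneg.mpr (by linarith)
  have hexpand (x : X) : ((Pi.single x₀ 1 : X → ℝ) x - uniformOff o x) ^ 2 =
      (if x = x₀ then 1 - 2 * m else 0) + m * uniformOff o x := by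
    by_cases hx : x = x₀
    · subst hx
      simp only [Pi.single_eq_same, uniformOff, if_neg hx₀, if_true, ← hm]
      ring
    · by_cases hxo : x = o <;> simp [uniformOff, hx, hxo, hx₀.symm, ← hm, sq]
  simp only [hexpand, Finset.sum_add_distrib, Finset.sum_ite_eq', Finset.mem_univ, if_true,
    ← Finset.mul_sum, sum_uniformOff]
  linarith

theorem sum_sq_walkDist_sub_uniformOff_le [Nontrivial X] (hσ : σ o = o) (hρ : ρ o = o)
    (hK : 0 < K) (hpoincare : ∀ φ : X → ℝ, φ o = 0 → ∑ x, φ x = 0 →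
      ∑ x, φ x ^ 2 ≤ K * (dirichletEnergy σ φ + dirichletEnergy ρ φ))
    {x₀ : X} (hx₀ : x₀ ≠ o) (n : ℕ) :
    ∑ x, ((walkDist (lazyStep σ ρ) x₀ n x).toReal - uniformOff o x) ^ 2 ≤
      Real.exp (-(n / (8 * K))) := by
  have hdev (x : X) : (walkDist (lazyStep σ ρ) x₀ n x).toReal - uniformOff o x =
      (lazyAverage σ ρ ^ n) (Pi.single x₀ 1 - uniformOff o) x := by
    rw [map_sub, lazyAverage_pow_uniformOff hσ hρ, ← toReal_walkDist_lazyStep, Pi.sub_apply]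
  simp only [hdev]
  refine (sum_sq_lazyAverage_pow_le hσ hρ hK hpoincare ?_ ?_ n).trans
    (mul_le_of_le_one_right (Real.exp_pos _).le (sum_sq_single_sub_uniformOff_le hx₀))
  · simp [uniformOff, hx₀.symm]
  · simp [sum_uniformOff]

end UniformOff

theorem sq_sum_walkDist_sub_le [Nontrivial X] (hσ : σ o = o) (hρ : ρ o = o) (hK : 0 < K)
    (hpoincare : ∀ φ : X → ℝ, φ o = 0 → ∑ x, φ x = 0 →
      ∑ x, φ x ^ 2 ≤ K * (dirichletEnergy σ φ + dirichletEnergy ρ φ))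
    {x₀ : X} (hx₀ : x₀ ≠ o) (n : ℕ) {A : Finset X} (hA : o ∉ A) :
    (∑ x ∈ A, (walkDist (lazyStep σ ρ) x₀ n x).toReal - A.card / ((Fintype.card X : ℝ) - 1)) ^ 2 ≤
      Fintype.card X * Real.exp (-(n / (8 * K))) := by
  classical
  rw [← sum_uniformOff_of_notMem hA, ← Finset.sum_sub_distrib]
  refine sq_sum_le_card_mul_sum_sq.trans ?_
  gcongr
  · exact A.card_le_univ
  · exact (Finset.sum_le_univ_sum_of_nonneg fun x => sq_nonneg _).trans
      (sum_sq_walkDist_sub_uniformOff_le hσ hρ hK hpoincare hx₀ n)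

theorem abs_sum_toReal_sub_card_div_le_one [Nontrivial X] (μ : PMF X) {A : Finset X}
    (hA : o ∉ A) :
    |∑ x ∈ A, (μ x).toReal - A.card / ((Fintype.card X : ℝ) - 1)| ≤ 1 := by
  classical
  have htotal : ∑ x, (μ x).toReal = 1 := by
    rw [← ENNReal.toReal_sum fun x _ => μ.apply_ne_top x,
      (tsum_fintype μ).symm.trans μ.tsum_coe, ENNReal.toReal_one]
  have hcard : (1 : ℝ) < Fintype.card X := Nat.one_lt_cast.mpr Fintype.one_lt_card
  have huniform (x : X) : 0 ≤ uniformOff o x := by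
    rw [uniformOff]
    split_ifs
    · rfl
    · exact one_div_nonneg.mpr (by linarith)
  rw [← sum_uniformOff_of_notMem hA]
  exact abs_sub_le_of_nonneg_of_le (Finset.sum_nonneg fun _ _ => ENNReal.toReal_nonneg)
    (htotal ▸ Finset.sum_le_univ_sum_of_nonneg fun _ => ENNReal.toReal_nonneg)
    (Finset.sum_nonneg fun x _ => huniform x)
    (sum_uniformOff o ▸ Finset.sum_le_univ_sum_of_nonneg huniform)

end LazyChain

section Scale

theorem eventually_exists_scale : ∀ᶠ l : ℝ in Filter.atTop, ∃ u : ℕ,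
    Real.exp l < 2 ^ u ^ 3 ∧ (2 : ℝ) ^ (42 * u ^ 2) ≤ Real.exp (l / Real.log l) := by
  filter_upwards [(isLittleO_log_rpow_atTop (show (0 : ℝ) < 1 / 3 by norm_num)).bound
    (show (0 : ℝ) < 1 / 378 by norm_num), Filter.eventually_gt_atTop 1] with l hlog hl
  have hlog0 : 0 < Real.log l := Real.log_pos hl
  set t := l ^ (1 / 3 : ℝ) with ht
  have ht3 : t ^ 3 = l := by
    rw [ht, ← Real.rpow_mul_natCast (by linarith)]
    norm_num
  have ht1 : 1 ≤ t := Real.one_le_rpow hl.le (by norm_num)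
  rw [Real.norm_of_nonneg hlog0.le, Real.norm_of_nonneg (by linarith)] at hlog
  set u := ⌊2 * t⌋₊ + 1 with hu
  have hu_gt : 2 * t < u := by
    rw [hu]
    exact_mod_cast Nat.lt_floor_add_one (2 * t)
  have hu_le : (u : ℝ) ≤ 3 * t := by
    rw [hu, Nat.cast_add_one]
    linarith [Nat.floor_le (show 0 ≤ 2 * t by linarith)]
  have htwo (k : ℕ) : (2 : ℝ) ^ k = Real.exp (k * Real.log 2) := by
    rw [Real.exp_nat_mul, Real.exp_log two_pos]
  refine ⟨u, ?_, ?_⟩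
  · rw [htwo, Real.exp_lt_exp, ← ht3]
    calc t ^ 3 < 8 * t ^ 3 * Real.log 2 := by
          nlinarith [Real.log_two_gt_d9, pow_pos (one_pos.trans_le ht1) 3]
      _ = (2 * t) ^ 3 * Real.log 2 := by ring
      _ ≤ (u ^ 3 : ℕ) * Real.log 2 := by
          rw [Nat.cast_pow]
          gcongr
  · rw [htwo, Real.exp_le_exp, le_div_iff₀ hlog0]
    calc (42 * u ^ 2 : ℕ) * Real.log 2 * Real.log l
        ≤ (42 * (3 * t) ^ 2) * 1 * (1 / 378 * t) := by
          push_cast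
          gcongr
          linarith [Real.log_two_lt_d9]
      _ = l := by
          rw [← ht3]
          ring

theorem sixteen_mul_two_pow_mul_le {l : ℝ} {u : ℕ} (hl : 0 ≤ l) (hu : Real.exp l < 2 ^ u ^ 3) :
    16 * 2 ^ (35 * u ^ 2) * l ≤ 2 ^ (42 * u ^ 2) := by
  have hu0 : 0 < u := pos_of_lt_two_pow_cube le_rfl <| by
    exact_mod_cast (Real.one_le_exp hl).trans_lt hu
  have hsixteen : (16 : ℝ) ≤ 2 ^ (4 * u ^ 2) := by
    calc (16 : ℝ) = 2 ^ 4 := by norm_num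
      _ ≤ 2 ^ (4 * u ^ 2) := pow_le_pow_right₀ one_le_two (by nlinarith)
  have hlog : l ≤ 2 ^ (3 * u ^ 2) := by
    have hlu : l < u ^ 3 * Real.log 2 := by
      rw [← Real.lt_log_iff_exp_lt (by positivity), Real.log_pow] at hu
      exact_mod_cast hu
    calc l ≤ (u : ℝ) ^ 3 * 1 := by
          refine hlu.le.trans ?_
          gcongr
          linarith [Real.log_two_lt_d9]
      _ ≤ (2 ^ u ^ 2) ^ 3 := by
          rw [mul_one]
          gcongr
          exact_mod_cast (Nat.le_self_pow two_ne_zero u).trans Nat.lt_two_pow_self.le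
      _ = 2 ^ (3 * u ^ 2) := by rw [← pow_mul, mul_comm]
  calc 16 * 2 ^ (35 * u ^ 2) * l ≤ 2 ^ (4 * u ^ 2) * 2 ^ (35 * u ^ 2) * 2 ^ (3 * u ^ 2) := by gcongr
    _ = 2 ^ (42 * u ^ 2) := by ring

theorem one_lt_log_of_sixteen_le {p : ℕ} (hp : 16 ≤ p) : 1 < Real.log p := by
  rw [Real.lt_log_iff_exp_lt (by positivity)]
  have hp' : (16 : ℝ) ≤ p := by exact_mod_cast hp
  linarith [Real.exp_one_lt_d9]

theorem lt_log_log_of_exp_le_orderOf {C : ℝ} {p : ℕ} [Fact p.Prime] (hp : 16 ≤ p) (γ : (ZMod p)ˣ)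
    (hγ : Real.exp (C * Real.log p / Real.log (Real.log p)) ≤ orderOf γ) :
    C < Real.log (Real.log p) := by
  have hp0 : (0 : ℝ) < p := by positivity
  have hl : 1 < Real.log p := one_lt_log_of_sixteen_le hp
  have horder : (orderOf γ : ℝ) < p := by
    have h : orderOf γ ∣ p - 1 := ZMod.card_units p ▸ orderOf_dvd_card
    exact_mod_cast (Nat.le_of_dvd (Nat.sub_pos_of_lt (by omega)) h).trans_lt (by omega)
  have h := hγ.trans_lt horder
  rw [← Real.lt_log_iff_exp_lt hp0, div_lt_iff₀ (Real.log_pos hl), mul_comm] at h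
  exact lt_of_mul_lt_mul_left h (by linarith)

theorem exists_scale_of_exp_le_orderOf : ∃ C : ℝ, 0 < C ∧ ∀ (p : ℕ) [Fact p.Prime], 16 ≤ p →
    ∀ γ : (ZMod p)ˣ, Real.exp (C * Real.log p / Real.log (Real.log p)) ≤ orderOf γ →
      ∃ u : ℕ, p < 2 ^ u ^ 3 ∧ 2 ^ (5 * u ^ 2 + 1) ≤ orderOf γ ∧
        16 * 2 ^ (35 * u ^ 2) * Real.log p ≤ Real.exp (Real.log p / Real.log (Real.log p)) := by
  obtain ⟨B, hB⟩ := Filter.eventually_atTop.mp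
    (Real.tendsto_exp_atTop.eventually eventually_exists_scale)
  refine ⟨max B 1, by positivity, fun p _ hp γ hγ => ?_⟩
  have hp0 : (0 : ℝ) < p := by positivity
  have hl : 1 < Real.log p := one_lt_log_of_sixteen_le hp
  have hloglog : 0 < Real.log (Real.log p) := Real.log_pos hl
  obtain ⟨u, hu, hle⟩ := hB (Real.log (Real.log p))
    ((le_max_left B 1).trans (lt_log_log_of_exp_le_orderOf hp γ hγ).le)
  rw [Real.exp_log (by linarith)] at hu hle
  have horder : (2 : ℝ) ^ (42 * u ^ 2) ≤ orderOf γ := by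
    refine (hle.trans ?_).trans hγ
    gcongr
    exact le_mul_of_one_le_left (by linarith) (le_max_right B 1)
  have hmix := (sixteen_mul_two_pow_mul_le (by linarith) hu).trans hle
  rw [Real.exp_log hp0] at hu
  have hpu : p < 2 ^ u ^ 3 := by exact_mod_cast hu
  have hu0 := pos_of_lt_two_pow_cube (by omega) hpu
  have hexponent : 5 * u ^ 2 + 1 ≤ 42 * u ^ 2 := by nlinarith
  exact ⟨u, hpu, (Nat.pow_le_pow_right two_pos hexponent).trans (by exact_mod_cast horder), hmix⟩

theorem le_exp_half_sub {D l c : ℝ} (hD : D ≤ 1) (hl : 1 ≤ l)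
    (hDl : D ^ 2 ≤ Real.exp l * Real.exp (-(2 * c * l))) : D ≤ Real.exp (1 / 2 - c) := by
  rcases le_total c (1 / 2) with hc | hc
  · exact hD.trans (Real.one_le_exp (by linarith))
  · refine (le_abs_self D).trans (abs_le_of_sq_le_sq (hDl.trans ?_) (Real.exp_pos _).le)
    rw [← Real.exp_add, ← Real.exp_nat_mul]
    gcongr
    push_cast
    nlinarith

end Scale

theorem sq_sum_walkDist_starScale_sub_le {p : ℕ} [Fact p.Prime] {u : ℕ} (hp : p < 2 ^ u ^ 3)
    {γ : (ZMod p)ˣ} (hγ : 2 ^ (5 * u ^ 2 + 1) ≤ orderOf γ) {x₀ : ZMod p} (hx₀ : x₀ ≠ 0) (n : ℕ)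
    {A : Finset (ZMod p)} (hA : 0 ∉ A) :
    (∑ x ∈ A, (walkDist (lazyStep (starScale γ) (starScale γ⁻¹)) x₀ n x).toReal -
        A.card / ((p : ℝ) - 1)) ^ 2 ≤ p * Real.exp (-(n / (8 * 2 ^ (35 * u ^ 2)))) := by
  have hpoincare (φ : ZMod p → ℝ) (hφ0 : φ 0 = 0) (hφ : ∑ x, φ x = 0) :=
    sum_sq_le_dirichletEnergy_starScale_of_reflectScale
      (fun _ hf => sum_sq_le_dirichletEnergy_reflectScale hp hγ hf) hφ0 hφ
  simpa only [ZMod.card] using sq_sum_walkDist_sub_le (starScale_zero γ) (starScale_zero γ⁻¹)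
    (by positivity) hpoincare hx₀ n hA

theorem stmt0 :
    ∃ C1 C2 C3 : ℝ, 0 < C1 ∧ 0 < C2 ∧ 0 < C3 ∧
      ∀ (p : ℕ) [Fact p.Prime], 16 ≤ p →
        ∀ γ : ZMod p, γ ≠ 0 →
          Real.exp (C1 * Real.log p / Real.log (Real.log p)) ≤ orderOf γ →
          ∀ X0 : ZMod p, X0 ≠ 0 →
            ∀ step : ZMod p → PMF (ZMod p),
              step = (fun x => PMF.map
                (fun b : Bool × Bool =>
                  if b.1 then x
                  else if b.2 then (if x = 1 then 1 else x / (x - 1)) * γ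
                  else (if x = 1 then 1 else x / (x - 1)) * γ⁻¹)
                (PMF.uniformOfFintype (Bool × Bool))) →
              ∀ c : ℝ, 0 < c →
                ∀ n : ℕ, c * Real.exp (Real.log p / Real.log (Real.log p)) ≤ n →
                  ∀ A : Finset (ZMod p), (∀ x ∈ A, x ≠ 0) →
                    (1/2) * |(∑ x ∈ A, (walkDist step X0 n x).toReal)
                        - (A.card : ℝ) / ((p : ℝ) - 1)| ≤ C2 * Real.exp (-C3 * c) := by
  obtain ⟨C, hC0, hC⟩ := exists_scale_of_exp_le_orderOf
  refine ⟨C, Real.exp (1 / 2), 1, hC0, Real.exp_pos _, one_pos, ?_⟩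
  intro p _ hp γ hγ0 hγ X0 hX0 step hstep c hc n hn A hA
  lift γ to (ZMod p)ˣ using hγ0.isUnit
  rw [orderOf_units] at hγ
  obtain ⟨u, hpu, hγu, hmix⟩ := hC p hp γ hγ
  have hlazy : step = lazyStep (starScale γ) (starScale γ⁻¹) := by
    funext x
    simp only [hstep, lazyStep, starScale_apply, Units.val_inv_eq_inv_val]
  have h0A : (0 : ZMod p) ∉ A := fun h0 => hA 0 h0 rfl
  have hsq := sq_sum_walkDist_starScale_sub_le hpu hγu hX0 n h0A
  have hone := abs_sum_toReal_sub_card_div_le_one (walkDist step X0 n) h0A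
  rw [ZMod.card] at hone
  rw [← hlazy, ← sq_abs] at hsq
  have htime : 2 * c * Real.log p ≤ n / (8 * 2 ^ (35 * u ^ 2)) := by
    rw [le_div_iff₀ (by positivity)]
    linear_combination c * hmix + hn
  have hdecay := le_exp_half_sub hone (one_lt_log_of_sixteen_le hp).le (c := c) (hsq.trans (by
    rw [Real.exp_log (by positivity)]
    gcongr))
  rw [← Real.exp_add, neg_one_mul, ← sub_eq_add_neg]
  exact (mul_le_of_le_one_left (abs_nonneg _) (by norm_num)).trans hdecay
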